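/- Fix d ≥ 1, k ≥ 0 and ρ ∈ (0,1]. There exists a constant C = C(d,k,ρ) such that for every h > 0, every z ∈ ℝ^d, every convex set K with B(z,ρh) ⊆ K ⊆ B(z,h), every continuously differentiable function p : ℝ^d → ℝ, and every polynomial vector field u : ℝ^d → ℝ^d of degree ≤ k, one has h² ∫_K ‖∇p‖² dx ≤ C ( h² ∫_K ‖∇p − Δu‖² dx + ∫_K ‖Du‖² dx ). -/

import Mathlib

open MeasureTheory

/-- Partial derivative `∂f/∂x_j` of a scalar function on `ℝ^d`. -/
noncomputable def pderiv' {d : ℕ} (f : EuclideanSpace ℝ (Fin d) → ℝ) (j : Fin d)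
    (x : EuclideanSpace ℝ (Fin d)) : ℝ :=
  fderiv ℝ f x (EuclideanSpace.single j 1)

/-- Laplacian `Δf = ∑_j ∂²f/∂x_j²` of a scalar function on `ℝ^d`. -/
noncomputable def lap' {d : ℕ} (f : EuclideanSpace ℝ (Fin d) → ℝ)
    (x : EuclideanSpace ℝ (Fin d)) : ℝ :=
  ∑ j : Fin d, pderiv' (fun y => pderiv' f j y) j x

/-!
Since `∇p = (∇p - Δu) + Δu`, everything reduces to the inverse estimate
`h² ∫_K ‖Δu‖² ≤ C ∫_K ‖Du‖²`, applied to one component `P` of `u` at a time. Enlarging `K` to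
`B(z, h)` on the left, shrinking it to `B(z, ρh)` on the right, and substituting `x = z + h y`
(which preserves the degree) leaves the case `z = 0`, `h = 1`. There `P ↦ ΔP ∈ L²(B(0, 1))` and
`P ↦ DP ∈ L²(B(0, ρ))` are linear maps on the finite-dimensional space of polynomials of degree
`≤ k`. A polynomial whose gradient vanishes almost everywhere on `B(0, ρ)` has zero gradient, hence
zero Laplacian, so the kernel of the second map is contained in that of the first, and the first
factors through the second by a bounded operator.
-/

open Metric Bornology
open scoped Pointwise ENNReal

section NormEstimate

variable {𝕜 V E F : Type*} [NontriviallyNormedField 𝕜] [CompleteSpace 𝕜] [AddCommGroup V]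
  [Module 𝕜 V] [FiniteDimensional 𝕜 V] [NormedAddCommGroup E] [NormedSpace 𝕜 E]
  [NormedAddCommGroup F] [NormedSpace 𝕜 F]

theorem exists_norm_le_mul_norm_of_ker_le_ker {A : V →ₗ[𝕜] E} {B : V →ₗ[𝕜] F}
    (hAB : A.ker ≤ B.ker) : ∃ C, ∀ v, ‖B v‖ ≤ C * ‖A v‖ := by
  let T : A.range →L[𝕜] F :=
    LinearMap.toContinuousLinearMap (A.ker.liftQ B hAB ∘ₗ A.quotKerEquivRange.symm)
  have hT (v : V) : T (A.rangeRestrict v) = B v := by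
    have : A.quotKerEquivRange.symm (A.rangeRestrict v) = A.ker.mkQ v :=
      A.quotKerEquivRange.symm_apply_eq.mpr rfl
    simp [T, this]
  exact ⟨‖T‖, fun v => hT v ▸ T.le_opNorm (A.rangeRestrict v)⟩

theorem exists_norm_sq_le_mul_sum_norm_sq_of_iInf_ker_le_ker {κ : Type*} [Fintype κ]
    {A : κ → V →ₗ[𝕜] E} {B : V →ₗ[𝕜] F} (hAB : ⨅ j, (A j).ker ≤ B.ker) :
    ∃ C, 0 ≤ C ∧ ∀ v, ‖B v‖ ^ 2 ≤ C * ∑ j, ‖A j v‖ ^ 2 := by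
  let A' : V →ₗ[𝕜] PiLp 2 fun _ : κ => E :=
    (WithLp.linearEquiv 2 𝕜 (κ → E)).symm.toLinearMap ∘ₗ LinearMap.pi A
  have hA' : A'.ker ≤ B.ker := by
    simpa only [A', LinearEquiv.ker_comp, LinearMap.ker_pi] using hAB
  obtain ⟨C, hle⟩ := exists_norm_le_mul_norm_of_ker_le_ker hA'
  refine ⟨C ^ 2, sq_nonneg C, fun v => ?_⟩
  calc ‖B v‖ ^ 2 ≤ (C * ‖A' v‖) ^ 2 := pow_le_pow_left₀ (norm_nonneg _) (hle v) 2
    _ = C ^ 2 * ∑ j, ‖A j v‖ ^ 2 := by rw [mul_pow, PiLp.norm_sq_eq_of_L2]; rfl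

end NormEstimate

section Integrals

theorem memLp_restrict_of_continuous_of_isBounded {X E : Type*} [PseudoMetricSpace X]
    [ProperSpace X] [MeasurableSpace X] [OpensMeasurableSpace X] [NormedAddCommGroup E]
    {μ : Measure X} [IsFiniteMeasureOnCompacts μ] {f : X → E} {s : Set X} (hf : Continuous f)
    (hs : IsBounded s) (p : ℝ≥0∞) : MemLp f p (μ.restrict s) := by
  have hcpt : IsCompact (closure s) := hs.isCompact_closure
  have : IsFiniteMeasure (μ.restrict (closure s)) := ⟨by simpa using hcpt.measure_lt_top⟩
  obtain ⟨M, hM⟩ := hcpt.exists_bound_of_continuousOn hf.continuousOn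
  have hle : ∀ᵐ x ∂μ.restrict (closure s), ‖f x‖ ≤ M :=
    (ae_restrict_mem isClosed_closure.measurableSet).mono hM
  exact (MemLp.of_bound hf.aestronglyMeasurable M hle).mono_measure
    (Measure.restrict_mono_set μ subset_closure)

theorem integrableOn_of_continuous_of_isBounded {X E : Type*} [PseudoMetricSpace X]
    [ProperSpace X] [MeasurableSpace X] [OpensMeasurableSpace X] [NormedAddCommGroup E]
    {μ : Measure X} [IsFiniteMeasureOnCompacts μ] {f : X → E} {s : Set X} (hf : Continuous f)
    (hs : IsBounded s) : IntegrableOn f s μ :=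
  memLp_one_iff_integrable.mp (memLp_restrict_of_continuous_of_isBounded hf hs 1)

theorem setIntegral_sum_of_continuous_of_isBounded {X E κ : Type*} [PseudoMetricSpace X]
    [ProperSpace X] [MeasurableSpace X] [OpensMeasurableSpace X] [NormedAddCommGroup E]
    [NormedSpace ℝ E] [Fintype κ] {μ : Measure X} [IsFiniteMeasureOnCompacts μ] {f : κ → X → E}
    {s : Set X} (hf : ∀ i, Continuous (f i)) (hs : IsBounded s) :
    ∫ x in s, ∑ i, f i x ∂μ = ∑ i, ∫ x in s, f i x ∂μ :=
  integral_finsetSum _ fun i _ => integrableOn_of_continuous_of_isBounded (hf i) hs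

theorem norm_toLp_two_sq {α E : Type*} [MeasurableSpace α] {μ : Measure α}
    [NormedAddCommGroup E] [InnerProductSpace ℝ E] {f : α → E} (hf : MemLp f 2 μ) :
    ‖hf.toLp f‖ ^ 2 = ∫ x, ‖f x‖ ^ 2 ∂μ := by
  rw [← real_inner_self_eq_norm_sq, L2.inner_def]
  refine integral_congr_ae (hf.coeFn_toLp.mono fun x hx => ?_)
  simp only [hx, real_inner_self_eq_norm_sq]

theorem integral_norm_sq_le_two_mul_add {α E : Type*} [MeasurableSpace α] {μ : Measure α}
    [NormedAddCommGroup E] {f g : α → E} (hf : MemLp f 2 μ) (hg : MemLp g 2 μ) :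
    ∫ x, ‖f x‖ ^ 2 ∂μ ≤ 2 * ((∫ x, ‖f x - g x‖ ^ 2 ∂μ) + ∫ x, ‖g x‖ ^ 2 ∂μ) := by
  have hfg : Integrable (fun x => ‖f x - g x‖ ^ 2) μ := (hf.sub hg).integrable_norm_pow two_ne_zero
  have hg' : Integrable (fun x => ‖g x‖ ^ 2) μ := hg.integrable_norm_pow two_ne_zero
  rw [← integral_add hfg hg', ← integral_const_mul]
  refine integral_mono (hf.integrable_norm_pow two_ne_zero) ((hfg.add hg').const_mul 2)
    fun x => ?_
  calc ‖f x‖ ^ 2 ≤ (‖f x - g x‖ + ‖g x‖) ^ 2 :=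
        pow_le_pow_left₀ (norm_nonneg _) (norm_le_norm_sub_add _ _) 2
    _ ≤ 2 * (‖f x - g x‖ ^ 2 + ‖g x‖ ^ 2) := add_sq_le

theorem setIntegral_comp_add_smul {E F : Type*} [NormedAddCommGroup E] [NormedSpace ℝ E]
    [FiniteDimensional ℝ E] [MeasurableSpace E] [BorelSpace E] [NormedAddCommGroup F]
    [NormedSpace ℝ F] (μ : Measure E) [μ.IsAddHaarMeasure] (f : E → F) (s : Set E) (z : E) {h : ℝ}
    (hh : 0 < h) :
    ∫ x in s, f (z + h • x) ∂μ = (h ^ Module.finrank ℝ E)⁻¹ • ∫ x in z +ᵥ h • s, f x ∂μ := by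
  rw [Measure.setIntegral_comp_smul_of_pos μ (fun x => f (z + x)) s hh]
  congr 1
  exact ((measurePreserving_add_left μ z).setIntegral_image_emb
    (measurableEmbedding_addLeft z) f (h • s)).symm

end Integrals

section Polynomials

open MvPolynomial

theorem totalDegree_bind₁_le {σ τ R : Type*} [CommSemiring R] {f : σ → MvPolynomial τ R} {n : ℕ}
    (hf : ∀ i, (f i).totalDegree ≤ n) (P : MvPolynomial σ R) :
    (bind₁ f P).totalDegree ≤ P.totalDegree * n := by
  rw [bind₁, aeval_def, eval₂_eq]
  refine totalDegree_finsetSum_le fun s hs => ?_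
  calc (algebraMap R (MvPolynomial τ R) (coeff s P) * ∏ i ∈ s.support, f i ^ s i).totalDegree
      ≤ (C (coeff s P) : MvPolynomial τ R).totalDegree + ∑ i ∈ s.support, (f i ^ s i).totalDegree :=
        (totalDegree_mul _ _).trans (Nat.add_le_add_left (totalDegree_finsetProd _ _) _)
    _ ≤ ∑ i ∈ s.support, s i * n := by
        rw [totalDegree_C, zero_add]
        exact Finset.sum_le_sum fun i _ =>
          (totalDegree_pow _ _).trans (Nat.mul_le_mul_left _ (hf i))
    _ = (s.sum fun _ e => e) * n := (Finset.sum_mul ..).symm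
    _ ≤ P.totalDegree * n := Nat.mul_le_mul_right n (le_totalDegree hs)

theorem hasFDerivAt_eval {𝕜 ι : Type*} [NontriviallyNormedField 𝕜] [Fintype ι]
    (P : MvPolynomial ι 𝕜) (x : ι → 𝕜) :
    HasFDerivAt (fun y => eval y P)
      (∑ j, eval x (pderiv j P) • (ContinuousLinearMap.proj j : (ι → 𝕜) →L[𝕜] 𝕜)) x := by
  classical
  induction P using MvPolynomial.induction_on with
  | C a =>
    simp only [eval_C]
    refine (hasFDerivAt_const a x).congr_fderiv ?_
    ext v
    simp
  | add P Q hP hQ =>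
    simp only [map_add]
    refine (hP.fun_add hQ).congr_fderiv ?_
    ext v
    simp [add_mul, Finset.sum_add_distrib]
  | mul_X P i hP =>
    simp only [map_mul, eval_X]
    refine (hP.mul (hasFDerivAt_apply i x)).congr_fderiv ?_
    ext v
    simp [pderiv_X, Pi.single_apply, add_mul, Finset.sum_add_distrib, Finset.mul_sum, mul_assoc,
      apply_ite (eval x)]

variable {ι : Type*}

/-- The polynomial function on Euclidean space defined by `P`. -/
noncomputable def polyFun (P : MvPolynomial ι ℝ) (x : EuclideanSpace ℝ ι) : ℝ :=
  eval (fun j => x j) P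

/-- The Laplacian `∑ j, ∂ⱼ∂ⱼ` as an operator on polynomials. -/
noncomputable def polyLaplacian [Fintype ι] : MvPolynomial ι ℝ →ₗ[ℝ] MvPolynomial ι ℝ :=
  ∑ j, (pderiv j).toLinearMap ∘ₗ (pderiv j).toLinearMap

theorem continuous_polyFun (P : MvPolynomial ι ℝ) : Continuous (polyFun P) :=
  (continuous_eval P).comp (by fun_prop)

theorem exists_totalDegree_le_polyFun_eq_comp_add_smul (P : MvPolynomial ι ℝ)
    (z : EuclideanSpace ℝ ι) (h : ℝ) :
    ∃ Q : MvPolynomial ι ℝ, Q.totalDegree ≤ P.totalDegree ∧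
      polyFun Q = fun x => polyFun P (z + h • x) := by
  let f (j : ι) : MvPolynomial ι ℝ := C (z j) + C h * X j
  have hf (j : ι) : (f j).totalDegree ≤ 1 :=
    (totalDegree_add _ _).trans (max_le (by simp) ((totalDegree_mul _ _).trans (by simp)))
  refine ⟨bind₁ f P, by simpa using totalDegree_bind₁_le hf P, funext fun x => ?_⟩
  have := eval₂Hom_bind₁ (RingHom.id ℝ) (fun j => x j) f P
  simpa [polyFun, f] using! this

theorem eq_zero_of_eqOn_polyFun_zero [Finite ι] {P : MvPolynomial ι ℝ}
    {U : Set (EuclideanSpace ℝ ι)} (hU : IsOpen U) (hne : U.Nonempty)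
    (hP : Set.EqOn (polyFun P) 0 U) : P = 0 := by
  have := Fintype.ofFinite ι
  obtain ⟨x, hx⟩ := hne
  obtain ⟨ε, hε, hball⟩ := Metric.isOpen_iff.mp
    (hU.preimage (PiLp.continuous_toLp 2 fun _ : ι => ℝ)) (fun j => x j) hx
  refine funext_set (fun j => ball (x j) ε) (fun j => ?_) fun y hy => ?_
  · exact Real.ball_eq_Ioo (x j) ε ▸ Set.Ioo_infinite (by linarith)
  · rw [← ball_pi _ hε] at hy
    simpa [polyFun] using hP (hball hy)

variable [Fintype ι] {s t : Set (EuclideanSpace ℝ ι)}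

theorem memLp_polyFun (hs : IsBounded s) (P : MvPolynomial ι ℝ) (p : ℝ≥0∞) :
    MemLp (polyFun P) p (volume.restrict s) :=
  memLp_restrict_of_continuous_of_isBounded (continuous_polyFun P) hs p

/-- The linear map sending a polynomial to the class of its polynomial function in `L²(s)`, for a
bounded set `s`. -/
noncomputable def polyLp (hs : IsBounded s) :
    MvPolynomial ι ℝ →ₗ[ℝ] Lp ℝ 2 (volume.restrict s) where
  toFun P := (memLp_polyFun hs P 2).toLp (polyFun P)
  map_add' P Q := by
    rw [← MemLp.toLp_add]
    congr 1
    ext x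
    simp [polyFun]
  map_smul' c P := by
    rw [RingHom.id_apply, ← MemLp.toLp_const_smul]
    congr 1
    ext x
    simp [polyFun]

theorem norm_polyLp_sq (hs : IsBounded s) (P : MvPolynomial ι ℝ) :
    ‖polyLp hs P‖ ^ 2 = ∫ x in s, polyFun P x ^ 2 := by
  simpa only [Real.norm_eq_abs, sq_abs] using! norm_toLp_two_sq (memLp_polyFun hs P 2)

theorem polyLp_injective (hs : IsBounded s) (hs' : (interior s).Nonempty) :
    Function.Injective (polyLp hs) := by
  refine (injective_iff_map_eq_zero _).mpr fun P hP => ?_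
  have hae : polyFun P =ᵐ[volume.restrict s] 0 :=
    (memLp_polyFun hs P 2).coeFn_toLp.symm.trans (Lp.eq_zero_iff_ae_eq_zero.mp hP)
  exact eq_zero_of_eqOn_polyFun_zero isOpen_interior hs' <|
    Measure.eqOn_open_of_ae_eq (ae_restrict_of_ae_restrict_of_subset interior_subset hae)
      isOpen_interior (continuous_polyFun P).continuousOn continuousOn_const

theorem exists_setIntegral_polyLaplacian_sq_le (k : ℕ) (hs : IsBounded s)
    (hs' : (interior s).Nonempty) (ht : IsBounded t) :
    ∃ C, 0 ≤ C ∧ ∀ P : MvPolynomial ι ℝ, P.totalDegree ≤ k →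
      ∫ x in t, polyFun (polyLaplacian P) x ^ 2 ≤
        C * ∫ x in s, ∑ j, polyFun (pderiv j P) x ^ 2 := by
  let W := restrictTotalDegree ι ℝ k
  have hker : ⨅ j, ((polyLp hs ∘ₗ (pderiv j).toLinearMap).domRestrict W).ker ≤
      ((polyLp ht ∘ₗ polyLaplacian).domRestrict W).ker := by
    intro P hP
    have hgrad (j : ι) : pderiv j P.1 = 0 := by
      refine polyLp_injective hs hs' ?_
      simpa using (Submodule.mem_iInf _).mp hP j
    simp [polyLaplacian, hgrad]
  obtain ⟨C, hC, hle⟩ := exists_norm_sq_le_mul_sum_norm_sq_of_iInf_ker_le_ker hker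
  refine ⟨C, hC, fun P hP => ?_⟩
  rw [setIntegral_sum_of_continuous_of_isBounded
    (fun j => (continuous_polyFun (pderiv j P)).fun_pow 2) hs]
  simpa [norm_polyLp_sq] using hle ⟨P, (mem_restrictTotalDegree ι k P).mpr hP⟩

end Polynomials

section Derivatives

open MvPolynomial

variable {d : ℕ}

theorem pderiv'_polyFun (P : MvPolynomial (Fin d) ℝ) (j : Fin d) :
    pderiv' (polyFun P) j = polyFun (pderiv j P) := by
  ext x
  have hP : HasFDerivAt (polyFun P)
      ((∑ i, polyFun (pderiv i P) x • ContinuousLinearMap.proj i) ∘L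
        (EuclideanSpace.equiv (Fin d) ℝ : EuclideanSpace ℝ (Fin d) →L[ℝ] Fin d → ℝ)) x :=
    HasFDerivAt.comp (g := fun y => eval y P) (f := EuclideanSpace.equiv (Fin d) ℝ) x
      (hasFDerivAt_eval P _) (EuclideanSpace.equiv (Fin d) ℝ).hasFDerivAt
  rw [pderiv', hP.fderiv]
  simp

theorem lap'_polyFun (P : MvPolynomial (Fin d) ℝ) :
    lap' (polyFun P) = polyFun (polyLaplacian P) := by
  ext x
  rw [lap']
  simp only [pderiv'_polyFun]
  simp [polyLaplacian, polyFun]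

theorem continuous_pderiv'_polyFun (P : MvPolynomial (Fin d) ℝ) (j : Fin d) :
    Continuous (pderiv' (polyFun P) j) :=
  pderiv'_polyFun P j ▸ continuous_polyFun _

theorem continuous_lap'_polyFun (P : MvPolynomial (Fin d) ℝ) : Continuous (lap' (polyFun P)) :=
  lap'_polyFun P ▸ continuous_polyFun _

theorem pderiv'_const_mul (c : ℝ) (f : EuclideanSpace ℝ (Fin d) → ℝ) (j : Fin d) :
    pderiv' (fun x => c * f x) j = fun x => c * pderiv' f j x := by
  ext x
  rw [pderiv', show (fun x => c * f x) = c • f from rfl, fderiv_const_smul_field]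
  rfl

theorem pderiv'_comp_add_smul (f : EuclideanSpace ℝ (Fin d) → ℝ) (z : EuclideanSpace ℝ (Fin d))
    (h : ℝ) (j : Fin d) :
    pderiv' (fun x => f (z + h • x)) j = fun x => h * pderiv' f j (z + h • x) := by
  ext x
  rw [pderiv', fderiv_comp_smul (f := fun y => f (z + y)), fderiv_comp_add_left]
  rfl

theorem lap'_comp_add_smul (f : EuclideanSpace ℝ (Fin d) → ℝ) (z : EuclideanSpace ℝ (Fin d))
    (h : ℝ) : lap' (fun x => f (z + h • x)) = fun x => h ^ 2 * lap' f (z + h • x) := by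
  ext x
  simp only [lap', pderiv'_comp_add_smul, pderiv'_const_mul, Finset.mul_sum]
  exact Finset.sum_congr rfl fun j _ => by ring

end Derivatives

section InverseEstimate

open MvPolynomial

variable {ρ : ℝ}

theorem exists_sq_mul_setIntegral_ball_lap'_sq_le (d k : ℕ) (hρ : 0 < ρ) :
    ∃ C, 0 ≤ C ∧ ∀ h, 0 < h → ∀ (z : EuclideanSpace ℝ (Fin d)) (P : MvPolynomial (Fin d) ℝ),
      P.totalDegree ≤ k →
      h ^ 2 * ∫ x in ball z h, lap' (polyFun P) x ^ 2 ≤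
        C * ∫ x in ball z (ρ * h), ∑ j, pderiv' (polyFun P) j x ^ 2 := by
  have hne : (interior (ball (0 : EuclideanSpace ℝ (Fin d)) ρ)).Nonempty := by
    rwa [isOpen_ball.interior_eq, nonempty_ball]
  obtain ⟨C, hC, hle⟩ := exists_setIntegral_polyLaplacian_sq_le (ι := Fin d) k isBounded_ball hne
    (isBounded_ball (x := 0) (r := 1))
  refine ⟨C, hC, fun h hh z P hP => ?_⟩
  obtain ⟨Q, hQP, hQ⟩ := exists_totalDegree_le_polyFun_eq_comp_add_smul P z h
  have hball (r : ℝ) : z +ᵥ h • ball (0 : EuclideanSpace ℝ (Fin d)) r = ball z (r * h) := by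
    rw [_root_.smul_ball hh.ne', vadd_ball, smul_zero, vadd_eq_add, add_zero,
      Real.norm_of_nonneg hh.le, mul_comm]
  have href := hle Q (hQP.trans hP)
  simp only [← lap'_polyFun, ← pderiv'_polyFun, hQ, lap'_comp_add_smul, pderiv'_comp_add_smul,
    mul_pow, ← Finset.mul_sum, integral_const_mul] at href
  rw [setIntegral_comp_add_smul volume (fun x => lap' (polyFun P) x ^ 2) _ z hh,
    setIntegral_comp_add_smul volume (fun x => ∑ j, pderiv' (polyFun P) j x ^ 2) _ z hh,
    hball, hball, one_mul, smul_eq_mul, smul_eq_mul] at href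
  have hpos : 0 < h ^ 2 * (h ^ Module.finrank ℝ (EuclideanSpace ℝ (Fin d)))⁻¹ := by positivity
  refine le_of_mul_le_mul_left ?_ hpos
  linear_combination href

theorem exists_sq_mul_setIntegral_lap'_sq_le (d k : ℕ) (hρ : 0 < ρ) :
    ∃ C, ∀ h, 0 < h → ∀ (z : EuclideanSpace ℝ (Fin d)) (K : Set (EuclideanSpace ℝ (Fin d))),
      ball z (ρ * h) ⊆ K → K ⊆ ball z h → ∀ P : MvPolynomial (Fin d) ℝ, P.totalDegree ≤ k →
      h ^ 2 * ∫ x in K, lap' (polyFun P) x ^ 2 ≤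
        C * ∫ x in K, ∑ j, pderiv' (polyFun P) j x ^ 2 := by
  obtain ⟨C, hC, hle⟩ := exists_sq_mul_setIntegral_ball_lap'_sq_le d k hρ
  refine ⟨C, fun h hh z K hzK hKz P hP => ?_⟩
  have hlap : IntegrableOn (fun x => lap' (polyFun P) x ^ 2) (ball z h) :=
    integrableOn_of_continuous_of_isBounded ((continuous_lap'_polyFun P).pow 2) isBounded_ball
  have hgrad : IntegrableOn (fun x => ∑ j, pderiv' (polyFun P) j x ^ 2) K :=
    integrableOn_of_continuous_of_isBounded (continuous_finsetSum _ fun j _ =>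
      (continuous_pderiv'_polyFun P j).pow 2) (isBounded_ball.subset hKz)
  calc h ^ 2 * ∫ x in K, lap' (polyFun P) x ^ 2
      ≤ h ^ 2 * ∫ x in ball z h, lap' (polyFun P) x ^ 2 := by
        refine mul_le_mul_of_nonneg_left (setIntegral_mono_set hlap ?_ hKz.eventuallyLE)
          (sq_nonneg h)
        exact ae_of_all _ fun x => sq_nonneg _
    _ ≤ C * ∫ x in ball z (ρ * h), ∑ j, pderiv' (polyFun P) j x ^ 2 := hle h hh z P hP
    _ ≤ C * ∫ x in K, ∑ j, pderiv' (polyFun P) j x ^ 2 := by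
        refine mul_le_mul_of_nonneg_left (setIntegral_mono_set hgrad ?_ hzK.eventuallyLE) hC
        exact ae_of_all _ fun x => Finset.sum_nonneg fun j _ => sq_nonneg _

theorem exists_sq_mul_setIntegral_sum_lap'_sq_le (κ : Type*) [Fintype κ] (d k : ℕ)
    (hρ : 0 < ρ) :
    ∃ C, ∀ h, 0 < h → ∀ (z : EuclideanSpace ℝ (Fin d)) (K : Set (EuclideanSpace ℝ (Fin d))),
      ball z (ρ * h) ⊆ K → K ⊆ ball z h →
      ∀ P : κ → MvPolynomial (Fin d) ℝ, (∀ i, (P i).totalDegree ≤ k) →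
      h ^ 2 * ∫ x in K, ∑ i, lap' (polyFun (P i)) x ^ 2 ≤
        C * ∫ x in K, ∑ i, ∑ j, pderiv' (polyFun (P i)) j x ^ 2 := by
  obtain ⟨C, hle⟩ := exists_sq_mul_setIntegral_lap'_sq_le d k hρ
  refine ⟨C, fun h hh z K hzK hKz P hP => ?_⟩
  have hK : IsBounded K := isBounded_ball.subset hKz
  rw [setIntegral_sum_of_continuous_of_isBounded
      (fun i => (continuous_lap'_polyFun (P i)).fun_pow 2) hK,
    setIntegral_sum_of_continuous_of_isBounded (fun i => continuous_finsetSum _ fun j _ =>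
      (continuous_pderiv'_polyFun (P i) j).fun_pow 2) hK, Finset.mul_sum, Finset.mul_sum]
  exact Finset.sum_le_sum fun i _ => hle h hh z K hzK hKz (P i) (hP i)

end InverseEstimate

theorem continuous_gradient_of_contDiff {E : Type*} [NormedAddCommGroup E] [InnerProductSpace ℝ E]
    [CompleteSpace E] {f : E → ℝ} (hf : ContDiff ℝ 1 f) : Continuous (gradient f) :=
  (InnerProductSpace.toDual ℝ E).symm.continuous.comp (hf.continuous_fderiv one_ne_zero)

theorem pressure_gradient_control_general (d k : ℕ) {ρ : ℝ} (hρ : 0 < ρ) :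
    ∃ C : ℝ, ∀ (h : ℝ), 0 < h →
      ∀ (z : EuclideanSpace ℝ (Fin d)) (K : Set (EuclideanSpace ℝ (Fin d))),
        ball z (ρ * h) ⊆ K → K ⊆ ball z h →
      ∀ (g : EuclideanSpace ℝ (Fin d) → EuclideanSpace ℝ (Fin d)),
        MemLp g 2 (volume.restrict K) →
      ∀ (u : EuclideanSpace ℝ (Fin d) → EuclideanSpace ℝ (Fin d)),
      (∀ i : Fin d, ∃ P : MvPolynomial (Fin d) ℝ, P.totalDegree ≤ k ∧
        ∀ x, u x i = MvPolynomial.eval (fun j => x j) P) →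
      h ^ 2 * (∫ x in K, ‖g x‖ ^ 2) ≤
        C * (h ^ 2 * (∫ x in K, ∑ i : Fin d, (g x i - lap' (fun y => u y i) x) ^ 2)
          + ∫ x in K, ∑ i : Fin d, ∑ j : Fin d, (pderiv' (fun y => u y i) j x) ^ 2) := by
  obtain ⟨C, hle⟩ := exists_sq_mul_setIntegral_sum_lap'_sq_le (Fin d) d k hρ
  refine ⟨2 * max 1 C, fun h hh z K hzK hKz g hg u hu => ?_⟩
  choose P hP huP using hu
  have hu (i : Fin d) : (fun y => u y i) = polyFun (P i) := funext (huP i)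
  simp only [hu]
  let lapU (x : EuclideanSpace ℝ (Fin d)) : EuclideanSpace ℝ (Fin d) :=
    WithLp.toLp 2 fun i => lap' (polyFun (P i)) x
  have hlapU : MemLp lapU 2 (volume.restrict K) :=
    memLp_restrict_of_continuous_of_isBounded ((PiLp.continuous_toLp 2 _).comp
      (continuous_pi fun i => continuous_lap'_polyFun (P i))) (isBounded_ball.subset hKz) 2
  have hsplit := integral_norm_sq_le_two_mul_add hg hlapU
  have hinv := hle h hh z K hzK hKz P hP
  simp only [EuclideanSpace.real_norm_sq_eq, PiLp.sub_apply, lapU] at hsplit ⊢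
  set G := ∫ x in K, ∑ i, (g x i) ^ 2
  set R := ∫ x in K, ∑ i, (g x i - lap' (polyFun (P i)) x) ^ 2
  set L := ∫ x in K, ∑ i, lap' (polyFun (P i)) x ^ 2
  set D := ∫ x in K, ∑ i, ∑ j, pderiv' (polyFun (P i)) j x ^ 2
  have hR : 0 ≤ R := integral_nonneg fun x => Finset.sum_nonneg fun i _ => sq_nonneg _
  have hD : 0 ≤ D := integral_nonneg fun x =>
    Finset.sum_nonneg fun i _ => Finset.sum_nonneg fun j _ => sq_nonneg _
  calc h ^ 2 * G ≤ h ^ 2 * (2 * (R + L)) := by gcongr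
    _ = 2 * (1 * (h ^ 2 * R) + h ^ 2 * L) := by ring
    _ ≤ 2 * (max 1 C * (h ^ 2 * R) + max 1 C * D) := by
        gcongr 2 * ?_
        exact add_le_add
          (mul_le_mul_of_nonneg_right (le_max_left 1 C) (mul_nonneg (sq_nonneg h) hR))
          (hinv.trans (mul_le_mul_of_nonneg_right (le_max_right 1 C) hD))
    _ = 2 * max 1 C * (h ^ 2 * R + D) := by ring

/-- Element-level pressure-gradient control: for fixed `d ≥ 1`, `k`,
`ρ ∈ (0,1]` there is `C = C(d,k,ρ)` such that for every `h > 0`, every convex `K` with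
`B(z,ρh) ⊆ K ⊆ B(z,h)`, every `C¹` function `p : ℝ^d → ℝ` and every polynomial vector
field `u` of degree `≤ k`,
`h² ∫_K ‖∇p‖² ≤ C (h² ∫_K ‖∇p − Δu‖² + ∫_K ‖Du‖²)`. -/
theorem pressure_gradient_control
    (d k : ℕ) (hd : 1 ≤ d) (ρ : ℝ) (hρ : ρ ∈ Set.Ioc (0 : ℝ) 1) :
    ∃ C : ℝ, ∀ (h : ℝ), 0 < h →
      ∀ (z : EuclideanSpace ℝ (Fin d)) (K : Set (EuclideanSpace ℝ (Fin d))),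
        Convex ℝ K → Metric.ball z (ρ * h) ⊆ K → K ⊆ Metric.ball z h →
      ∀ (p : EuclideanSpace ℝ (Fin d) → ℝ), ContDiff ℝ 1 p →
      ∀ (u : EuclideanSpace ℝ (Fin d) → EuclideanSpace ℝ (Fin d)),
      (∀ i : Fin d, ∃ P : MvPolynomial (Fin d) ℝ, P.totalDegree ≤ k ∧
        ∀ x, u x i = MvPolynomial.eval (fun j => x j) P) →
      h ^ 2 * (∫ x in K, ‖gradient p x‖ ^ 2) ≤
        C * (h ^ 2 * (∫ x in K,
              ∑ i : Fin d, (gradient p x i - lap' (fun y => u y i) x) ^ 2)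
          + ∫ x in K, ∑ i : Fin d, ∑ j : Fin d,
              (pderiv' (fun y => u y i) j x) ^ 2) := by
  obtain ⟨C, hC⟩ := pressure_gradient_control_general d k hρ.1
  exact ⟨C, fun h hh z K _ hzK hKz p hp => hC h hh z K hzK hKz (gradient p) <|
    memLp_restrict_of_continuous_of_isBounded (continuous_gradient_of_contDiff hp)
      (isBounded_ball.subset hKz) 2⟩
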